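/- arXiv:1506.06523 — 2 statements merged into one kernel-verified Lean document; each statement's English description precedes it below -/
import Mathlib

section
/- Let A be a unital complex C*-algebra and let a, b, c, e be positive invertible elements of A. Then for every t ∈ [0,1], d(γ_{a,b}(t), γ_{c,e}(t)) ≤ (1−t)·d(a,c) + t·d(b,e), where γ_{a,b}(t) = a^{1/2}(a^{-1/2} b a^{-1/2})^t a^{1/2} and d(x,y) = ‖log(x^{-1/2} y x^{-1/2})‖. That is, the distance between two geodesics in the cone of positive invertibles is a convex function of the parameter. -/
/-- An element of a unital C*-algebra is *positive invertible* if it is self-adjoint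
with spectrum contained in `(0, ∞)`. -/
def IsPosInv {A : Type*} [CStarAlgebra A] (a : A) : Prop :=
  IsSelfAdjoint a ∧ spectrum ℝ a ⊆ Set.Ioi (0 : ℝ)

/-- Real powers `a ^ t` defined by the continuous functional calculus. -/
noncomputable def cpow {A : Type*} [CStarAlgebra A] (a : A) (t : ℝ) : A :=
  cfc (fun x : ℝ => x ^ t) a

/-- The logarithm defined by the continuous functional calculus. -/
noncomputable def clog {A : Type*} [CStarAlgebra A] (a : A) : A :=
  cfc Real.log a

/-- The metric `d(x, y) = ‖log (x^{-1/2} y x^{-1/2})‖` on positive invertible elements. -/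
noncomputable def dd {A : Type*} [CStarAlgebra A] (x y : A) : ℝ :=
  ‖clog (cpow x (-(1/2)) * y * cpow x (-(1/2)))‖

/-- The geodesic `γ_{a,b}(t) = a^{1/2} (a^{-1/2} b a^{-1/2})^t a^{1/2}`. -/
noncomputable def geo {A : Type*} [CStarAlgebra A] (a b : A) (t : ℝ) : A :=
  cpow a (1/2) * cpow (cpow a (-(1/2)) * b * cpow a (-(1/2))) t * cpow a (1/2)

/-- The distance from a point to a subset. -/
noncomputable def distSet {A : Type*} [CStarAlgebra A] (x : A) (C : Set A) : ℝ :=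
  sInf {r : ℝ | ∃ c ∈ C, r = dd x c}

/-- The distance between two subsets. -/
noncomputable def distSets {A : Type*} [CStarAlgebra A] (C D : Set A) : ℝ :=
  sInf {r : ℝ | ∃ x ∈ C, ∃ y ∈ D, r = dd x y}

/-- The orbit `O_H(1) = {h h* : h ∈ H}` of the identity under the action `h · a = h a h*`. -/
def orbitOne {A : Type*} [CStarAlgebra A] (H : Subgroup Aˣ) : Set A :=
  {x : A | ∃ h ∈ H, x = (h : A) * star (h : A)}

/-- The fixed point set `P^H = {a positive invertible : h a h* = a for all h ∈ H}`. -/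
def fixedSet {A : Type*} [CStarAlgebra A] (H : Subgroup Aˣ) : Set A :=
  {a : A | IsPosInv a ∧ ∀ h ∈ H, (h : A) * a * star (h : A) = a}

/-- The similarity number `Sim(H) = inf {‖s‖ ‖s⁻¹‖ : s a unitarizer of H}`. -/
noncomputable def simNum {A : Type*} [CStarAlgebra A] (H : Subgroup Aˣ) : ℝ :=
  sInf {c : ℝ | ∃ s : Aˣ, (∀ h ∈ H, (↑s⁻¹ : A) * (h : A) * (s : A) ∈ unitary A) ∧
    c = ‖(s : A)‖ * ‖(↑s⁻¹ : A)‖}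

/-- The set of norms of elements of `H`; its supremum is the size `|H|`. -/
def normSet {A : Type*} [CStarAlgebra A] (H : Subgroup Aˣ) : Set ℝ :=
  {r : ℝ | ∃ h ∈ H, r = ‖(h : A)‖}

/-- The orbit diameter function `D_H(a) = sup_{h ∈ H} d(a, h a h*)`. -/
noncomputable def orbDiam {A : Type*} [CStarAlgebra A] (H : Subgroup Aˣ) (a : A) : ℝ :=
  sSup {r : ℝ | ∃ h ∈ H, r = dd a ((h : A) * a * star (h : A))}

/-- The size `|p H q| = sup_{h ∈ H} ‖p h q‖` of the conjugated family `p H q`. -/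
noncomputable def sizeConj {A : Type*} [CStarAlgebra A] (H : Subgroup Aˣ) (p q : A) : ℝ :=
  sSup {c : ℝ | ∃ h ∈ H, c = ‖p * (h : A) * q‖}

/-- The similarity number `Sim(p H q)` of the conjugated family `p H q`. -/
noncomputable def simConj {A : Type*} [CStarAlgebra A] (H : Subgroup Aˣ) (p q : A) : ℝ :=
  sInf {c : ℝ | ∃ u : Aˣ, (∀ h ∈ H, (↑u⁻¹ : A) * (p * (h : A) * q) * (u : A) ∈ unitary A) ∧
    c = ‖(u : A)‖ * ‖(↑u⁻¹ : A)‖}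

/-- The geodesic `γ_{r², s²}(t) = r (r⁻¹ s² r⁻¹)^t r` for positive invertible `r`, `s`. -/
noncomputable def gammaRS {A : Type*} [CStarAlgebra A] (r s : Aˣ) (t : ℝ) : A :=
  (r : A) * cpow ((↑r⁻¹ : A) * ((s : A) * (s : A)) * (↑r⁻¹ : A)) t * (r : A)

/-! The metric is Thompson's metric: `d(x, y) ≤ r` means `x ≤ eʳ • y` and `y ≤ eʳ • x`. The point
`γ_{a,b}(t)` is the weighted geometric mean of `a` and `b`; it is homogeneous, and for `t ∈ [0, 1]`
increasing in `b` because `x ↦ x ^ t` is operator monotone. The symmetry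
`γ_{b,a}(1 - t) = γ_{a,b}(t)` transfers both properties to `a`. Hence `c ≤ eʳ • a` and `e ≤ eˢ • b`
imply `γ_{c,e}(t) ≤ e^{(1 - t) r + t s} • γ_{a,b}(t)`, which is applied in both directions. -/

section SemiconjBy

variable {𝕜 A : Type*} {p : A → Prop} [RCLike 𝕜] [Ring A] [StarRing A] [Algebra 𝕜 A]
  [TopologicalSpace A] [ContinuousFunctionalCalculus 𝕜 A p] [IsSemitopologicalRing A] [T2Space A]

theorem semiconjBy_cfcHomSuperset {v a b : A} {s : Set 𝕜} [CompactSpace s] (ha : p a) (hb : p b)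
    (has : spectrum 𝕜 a ⊆ s) (hbs : spectrum 𝕜 b ⊆ s) (h : SemiconjBy v a b)
    (hstar : SemiconjBy v (star a) (star b)) (f : C(s, 𝕜)) :
    SemiconjBy v (cfcHomSuperset ha has f) (cfcHomSuperset hb hbs f) := by
  induction f using ContinuousMap.induction_on_of_compact with
  | const r =>
    have hconst (c : A) (hc : p c) (hcs : spectrum 𝕜 c ⊆ s) :
        cfcHomSuperset hc hcs (.const s r) = algebraMap 𝕜 A r :=
      AlgHomClass.commutes (cfcHomSuperset hc hcs) r
    rw [hconst a, hconst b]
    exact (Algebra.commutes r v).symm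
  | id => rwa [cfcHomSuperset_id, cfcHomSuperset_id]
  | star_id => rwa [map_star, map_star, cfcHomSuperset_id, cfcHomSuperset_id]
  | add f g hf hg => rw [map_add, map_add]; exact hf.add_right hg
  | mul f g hf hg => rw [map_mul, map_mul]; exact hf.mul_right hg
  | frequently f hf =>
    have hca := cfcHomSuperset_continuous ha has
    have hcb := cfcHomSuperset_continuous hb hbs
    exact hf.mem_of_closed (isClosed_eq (hca.const_mul v) (hcb.mul_const v))

theorem semiconjBy_cfc {v a b : A} (ha : p a) (hb : p b) (h : SemiconjBy v a b)
    (hstar : SemiconjBy v (star a) (star b)) {f : 𝕜 → 𝕜}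
    (hf : ContinuousOn f (spectrum 𝕜 a ∪ spectrum 𝕜 b)) :
    SemiconjBy v (cfc f a) (cfc f b) := by
  have : CompactSpace ↥(spectrum 𝕜 a ∪ spectrum 𝕜 b) := isCompact_iff_compactSpace.mp
    ((ContinuousFunctionalCalculus.isCompact_spectrum a).union
      (ContinuousFunctionalCalculus.isCompact_spectrum b))
  rw [cfc_apply f a ha (hf.mono Set.subset_union_left),
    cfc_apply f b hb (hf.mono Set.subset_union_right)]
  exact semiconjBy_cfcHomSuperset ha hb Set.subset_union_left Set.subset_union_right h hstar
    ⟨_, hf.domRestrict⟩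

end SemiconjBy

theorem conjugate_le_conjugate_iff_of_isUnit {R : Type*} [Ring R] [StarRing R] [PartialOrder R]
    [StarOrderedRing R] {u x y : R} (hu : IsUnit u) :
    u * x * star u ≤ u * y * star u ↔ x ≤ y := by
  rw [← sub_nonneg, ← sub_mul, ← mul_sub, hu.star_right_conjugate_nonneg_iff, sub_nonneg]

theorem continuousOn_rpow_const_Ioi (t : ℝ) :
    ContinuousOn (fun x : ℝ ↦ x ^ t) (Set.Ioi 0) :=
  continuousOn_id.rpow_const fun _ hx ↦ Or.inl (ne_of_gt hx)

section CStarAlgebra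

variable {A : Type*} [CStarAlgebra A] [PartialOrder A] [StarOrderedRing A]

theorem semiconjBy_rpow {v a b : A} (ha : IsStrictlyPositive a) (hb : IsStrictlyPositive b)
    (h : SemiconjBy v a b) (t : ℝ) : SemiconjBy v (a ^ t) (b ^ t) := by
  rw [CFC.rpow_eq_cfc_real ha.nonneg, CFC.rpow_eq_cfc_real hb.nonneg]
  refine semiconjBy_cfc ha.isSelfAdjoint hb.isSelfAdjoint h ?_
    ((continuousOn_rpow_const_Ioi t).mono ?_)
  · rwa [ha.isSelfAdjoint.star_eq, hb.isSelfAdjoint.star_eq]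
  · exact Set.union_subset (fun _ ↦ ha.spectrum_pos) (fun _ ↦ hb.spectrum_pos)

theorem smul_rpow {a : A} (ha : IsStrictlyPositive a) {k : ℝ} (hk : 0 < k) (t : ℝ) :
    (k • a) ^ t = k ^ t • a ^ t := by
  have hcont := continuousOn_rpow_const_Ioi t
  have hscaled : (k • ·) '' spectrum ℝ a ⊆ Set.Ioi 0 :=
    Set.image_subset_iff.mpr fun _ hx ↦ mul_pos hk (ha.spectrum_pos hx)
  rw [CFC.rpow_eq_cfc_real (ha.smul hk).nonneg, CFC.rpow_eq_cfc_real ha.nonneg,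
    ← cfc_smul _ _ _ (hcont.mono fun _ ↦ ha.spectrum_pos),
    ← cfc_comp_smul k (fun x : ℝ ↦ x ^ t) a (hcont.mono hscaled) ha.isSelfAdjoint]
  exact cfc_congr fun x hx ↦ Real.mul_rpow hk.le (ha.spectrum_pos hx).le

theorem star_rpow (a : A) (t : ℝ) : star (a ^ t) = a ^ t :=
  CFC.rpow_nonneg.isSelfAdjoint.star_eq

theorem rpow_half_mul_self {a : A} (ha : 0 ≤ a) : a ^ (1 / 2 : ℝ) * a ^ (1 / 2 : ℝ) = a := by
  rw [← CFC.sqrt_eq_rpow, CFC.sqrt_mul_sqrt_self a]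

theorem isStrictlyPositive_conj_rpow {a b : A} (ha : IsStrictlyPositive a)
    (hb : IsStrictlyPositive b) (t : ℝ) : IsStrictlyPositive (a ^ t * b * a ^ t) :=
  hb.conjugate_of_isUnit_of_isSelfAdjoint b (a ^ t) (ha.rpow a t).isUnit (star_rpow a t)

theorem isPosInv_iff_isStrictlyPositive {a : A} : IsPosInv a ↔ IsStrictlyPositive a :=
  CStarAlgebra.isStrictlyPositive_iff_isSelfAdjoint_and_spectrum_pos.symm

theorem cpow_eq_rpow {a : A} (ha : 0 ≤ a) (t : ℝ) : cpow a t = a ^ t :=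
  (CFC.rpow_eq_cfc_real ha).symm

theorem norm_clog_le_iff {z : A} (hz : IsStrictlyPositive z) {r : ℝ} (hr : 0 ≤ r) :
    ‖clog z‖ ≤ r ↔
      algebraMap ℝ A (Real.exp (-r)) ≤ z ∧ z ≤ algebraMap ℝ A (Real.exp r) := by
  have hlog : ContinuousOn Real.log (spectrum ℝ z) :=
    Real.continuousOn_log.mono fun _ hx ↦ (hz.spectrum_pos hx).ne'
  rw [algebraMap_le_iff_le_spectrum hz.isSelfAdjoint,
    le_algebraMap_iff_spectrum_le hz.isSelfAdjoint, clog,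
    norm_cfc_le_iff _ _ hr hlog hz.isSelfAdjoint, ← forall₂_and]
  refine forall₂_congr fun x hx ↦ ?_
  have hx0 : 0 < x := hz.spectrum_pos hx
  rw [Real.norm_eq_abs, abs_le, Real.le_log_iff_exp_le hx0, Real.log_le_iff_le_exp hx0]

theorem dd_le_iff {x y : A} (hx : IsStrictlyPositive x) (hy : IsStrictlyPositive y) {r : ℝ}
    (hr : 0 ≤ r) : dd x y ≤ r ↔ x ≤ Real.exp r • y ∧ y ≤ Real.exp r • x := by
  have conj_le_conj (z w : A) : x ^ (-(1 / 2) : ℝ) * z * x ^ (-(1 / 2) : ℝ) ≤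
      x ^ (-(1 / 2) : ℝ) * w * x ^ (-(1 / 2) : ℝ) ↔ z ≤ w := by
    simpa only [star_rpow] using
      conjugate_le_conjugate_iff_of_isUnit (x := z) (y := w) (hx.rpow x (-(1 / 2))).isUnit
  have algebraMap_eq_conj (k : ℝ) :
      algebraMap ℝ A k = x ^ (-(1 / 2) : ℝ) * (k • x) * x ^ (-(1 / 2) : ℝ) := by
    rw [mul_smul_comm, smul_mul_assoc, CFC.conjugate_rpow_neg_one_half x,
      Algebra.algebraMap_eq_smul_one]
  rw [dd, cpow_eq_rpow hx.nonneg, norm_clog_le_iff (isStrictlyPositive_conj_rpow hx hy _) hr,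
    algebraMap_eq_conj, algebraMap_eq_conj, conj_le_conj, conj_le_conj, Real.exp_neg,
    inv_smul_le_iff_of_pos (Real.exp_pos r)]

variable {a b c e : A}

theorem geo_eq_rpow (ha : IsStrictlyPositive a) (hb : IsStrictlyPositive b) (t : ℝ) :
    geo a b t = a ^ (1 / 2 : ℝ) *
      (a ^ (-(1 / 2) : ℝ) * b * a ^ (-(1 / 2) : ℝ)) ^ t * a ^ (1 / 2 : ℝ) := by
  rw [geo, cpow_eq_rpow ha.nonneg, cpow_eq_rpow ha.nonneg,
    cpow_eq_rpow (isStrictlyPositive_conj_rpow ha hb _).nonneg]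

theorem isStrictlyPositive_geo (ha : IsStrictlyPositive a) (hb : IsStrictlyPositive b) (t : ℝ) :
    IsStrictlyPositive (geo a b t) := by
  rw [geo_eq_rpow ha hb]
  exact isStrictlyPositive_conj_rpow ha ((isStrictlyPositive_conj_rpow ha hb _).rpow _ t) _

-- With `v = b ^ (1/2) * a ^ (-1/2)`, the conjugates are `z = v* v` and `w = (v v*)⁻¹`, so the claim
-- is `v (v* v) ^ (-t) = (v v*) ^ (-t) v`.
theorem semiconjBy_conj_rpow_neg (ha : IsStrictlyPositive a) (hb : IsStrictlyPositive b) (t : ℝ) :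
    SemiconjBy (b ^ (1 / 2 : ℝ) * a ^ (-(1 / 2) : ℝ))
      ((a ^ (-(1 / 2) : ℝ) * b * a ^ (-(1 / 2) : ℝ)) ^ (-t))
      ((b ^ (-(1 / 2) : ℝ) * a * b ^ (-(1 / 2) : ℝ)) ^ t) := by
  have hz := isStrictlyPositive_conj_rpow ha hb (-(1 / 2))
  have hw := isStrictlyPositive_conj_rpow hb ha (-(1 / 2))
  have haa := rpow_half_mul_self ha.nonneg
  have hbb := rpow_half_mul_self hb.nonneg
  have ha_inv := CFC.rpow_mul_rpow_neg (1 / 2) ha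
  have hb_inv := CFC.rpow_neg_mul_rpow (1 / 2) hb
  set p := a ^ (1 / 2 : ℝ)
  set p' := a ^ (-(1 / 2) : ℝ)
  set q := b ^ (1 / 2 : ℝ)
  set q' := b ^ (-(1 / 2) : ℝ)
  set z := p' * b * p' with hz_def
  set w := q' * a * q' with hw_def
  have hwv : w * (q * p') = q' * p :=
    calc w * (q * p') = q' * p * p * (q' * q) * p' := by rw [hw_def, ← haa]; noncomm_ring
      _ = q' * p * (p * p') := by rw [hb_inv]; noncomm_ring
      _ = q' * p := by rw [ha_inv, mul_one]
  have hvz : q' * p * z = q * p' :=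
    calc q' * p * z = q' * (p * p') * q * q * p' := by rw [hz_def, ← hbb]; noncomm_ring
      _ = (q' * q) * q * p' := by rw [ha_inv, mul_one]
      _ = q * p' := by rw [hb_inv, one_mul]
  have hzz : z * z ^ (-1 : ℝ) = 1 := by simpa only [CFC.rpow_one z] using CFC.rpow_mul_rpow_neg 1 hz
  have hsemiconj : SemiconjBy (q * p') (z ^ (-1 : ℝ)) w := by
    rw [SemiconjBy, hwv, ← hvz, mul_assoc, hzz, mul_one]
  simpa only [CFC.rpow_rpow z (-1) t (by norm_num) hz, neg_one_mul] using
    semiconjBy_rpow (hz.rpow z (-1)) hw hsemiconj t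

theorem geo_one_sub_swap (ha : IsStrictlyPositive a) (hb : IsStrictlyPositive b) (t : ℝ) :
    geo b a (1 - t) = geo a b t := by
  have hz := isStrictlyPositive_conj_rpow ha hb (-(1 / 2))
  have hbb := rpow_half_mul_self hb.nonneg
  have ha_inv := CFC.rpow_mul_rpow_neg (1 / 2) ha
  have ha_inv' := CFC.rpow_neg_mul_rpow (1 / 2) ha
  have hsemiconj := (semiconjBy_conj_rpow_neg ha hb (1 - t)).eq
  rw [geo_eq_rpow ha hb, geo_eq_rpow hb ha]
  set p := a ^ (1 / 2 : ℝ)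
  set p' := a ^ (-(1 / 2) : ℝ)
  set q := b ^ (1 / 2 : ℝ)
  set q' := b ^ (-(1 / 2) : ℝ)
  set z := p' * b * p' with hz_def
  set w := q' * a * q'
  have hpow : z * z ^ (-(1 - t)) = z ^ t := by
    nth_rw 1 [← CFC.rpow_one z]
    rw [← CFC.rpow_add hz.isUnit]
    congr 1
    ring
  calc q * w ^ (1 - t) * q = q * w ^ (1 - t) * (q * (p' * p)) := by rw [ha_inv', mul_one]
    _ = q * (w ^ (1 - t) * (q * p')) * p := by noncomm_ring
    _ = (p * p') * (q * q) * p' * z ^ (-(1 - t)) * p := by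
        rw [← hsemiconj, ha_inv]; noncomm_ring
    _ = p * (z * z ^ (-(1 - t))) * p := by rw [hbb, hz_def]; noncomm_ring
    _ = p * z ^ t * p := by rw [hpow]

theorem geo_le_geo_right (ha : IsStrictlyPositive a) (hb : IsStrictlyPositive b)
    (he : IsStrictlyPositive e) (h : b ≤ e) {t : ℝ} (ht : t ∈ Set.Icc (0 : ℝ) 1) :
    geo a b t ≤ geo a e t := by
  rw [geo_eq_rpow ha hb, geo_eq_rpow ha he]
  have hconj := IsSelfAdjoint.conjugate_le_conjugate h (star_rpow a (-(1 / 2)))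
  exact IsSelfAdjoint.conjugate_le_conjugate (CFC.rpow_le_rpow ht hconj) (star_rpow a (1 / 2))

theorem geo_le_geo (ha : IsStrictlyPositive a) (hb : IsStrictlyPositive b)
    (hc : IsStrictlyPositive c) (he : IsStrictlyPositive e) (hac : a ≤ c) (hbe : b ≤ e) {t : ℝ}
    (ht : t ∈ Set.Icc (0 : ℝ) 1) : geo a b t ≤ geo c e t :=
  calc geo a b t ≤ geo a e t := geo_le_geo_right ha hb he hbe ht
    _ = geo e a (1 - t) := (geo_one_sub_swap ha he t).symm
    _ ≤ geo e c (1 - t) := geo_le_geo_right he ha hc hac (Set.Icc.mem_iff_one_sub_mem.mp ht)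
    _ = geo c e t := geo_one_sub_swap hc he t

theorem geo_smul_right (ha : IsStrictlyPositive a) (hb : IsStrictlyPositive b) {k : ℝ}
    (hk : 0 < k) (t : ℝ) : geo a (k • b) t = k ^ t • geo a b t := by
  rw [geo_eq_rpow ha hb, geo_eq_rpow ha (hb.smul hk), mul_smul_comm, smul_mul_assoc,
    smul_rpow (isStrictlyPositive_conj_rpow ha hb _) hk, mul_smul_comm, smul_mul_assoc]

theorem geo_smul_smul (ha : IsStrictlyPositive a) (hb : IsStrictlyPositive b) {k l : ℝ}
    (hk : 0 < k) (hl : 0 < l) (t : ℝ) :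
    geo (k • a) (l • b) t = (k ^ (1 - t) * l ^ t) • geo a b t := by
  rw [← geo_one_sub_swap (ha.smul hk) (hb.smul hl), geo_smul_right (hb.smul hl) ha hk,
    geo_one_sub_swap ha (hb.smul hl), geo_smul_right ha hb hl, smul_smul]

theorem geo_le_exp_smul_geo (ha : IsStrictlyPositive a) (hb : IsStrictlyPositive b)
    (hc : IsStrictlyPositive c) (he : IsStrictlyPositive e) {r s : ℝ}
    (hca : c ≤ Real.exp r • a) (heb : e ≤ Real.exp s • b) {t : ℝ}
    (ht : t ∈ Set.Icc (0 : ℝ) 1) :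
    geo c e t ≤ Real.exp ((1 - t) * r + t * s) • geo a b t := by
  have hr := Real.exp_pos r
  have hs := Real.exp_pos s
  calc geo c e t ≤ geo (Real.exp r • a) (Real.exp s • b) t :=
        geo_le_geo hc he (ha.smul hr) (hb.smul hs) hca heb ht
    _ = Real.exp ((1 - t) * r + t * s) • geo a b t := by
        rw [geo_smul_smul ha hb hr hs, ← Real.exp_mul, ← Real.exp_mul, ← Real.exp_add,
          mul_comm r, mul_comm s]

end CStarAlgebra

/-- The distance between two geodesics in the cone of positive invertibles is a
convex function of the parameter. -/
theorem stmt3 {A : Type*} [CStarAlgebra A] (a b c e : A)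
    (ha : IsPosInv a) (hb : IsPosInv b) (hc : IsPosInv c) (he : IsPosInv e)
    (t : ℝ) (ht : t ∈ Set.Icc (0 : ℝ) 1) :
    dd (geo a b t) (geo c e t) ≤ (1 - t) * dd a c + t * dd b e := by
  let _ := CStarAlgebra.spectralOrder A
  have := CStarAlgebra.spectralOrderedRing A
  rw [isPosInv_iff_isStrictlyPositive] at ha hb hc he
  have hac : 0 ≤ dd a c := norm_nonneg _
  have hbe : 0 ≤ dd b e := norm_nonneg _
  have hr : 0 ≤ (1 - t) * dd a c + t * dd b e :=
    add_nonneg (mul_nonneg (sub_nonneg.mpr ht.2) hac) (mul_nonneg ht.1 hbe)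
  obtain ⟨a_le, c_le⟩ := (dd_le_iff ha hc hac).mp le_rfl
  obtain ⟨b_le, e_le⟩ := (dd_le_iff hb he hbe).mp le_rfl
  rw [dd_le_iff (isStrictlyPositive_geo ha hb t) (isStrictlyPositive_geo hc he t) hr]
  exact ⟨geo_le_exp_smul_geo hc he ha hb a_le b_le ht,
    geo_le_exp_smul_geo ha hb hc he c_le e_le ht⟩
end

section
/- Let A be a unital complex C*-algebra and H a subgroup of Aˣ. If a and b are positive invertible elements of A satisfying h a h* = a and h b h* = b for all h ∈ H, then for every t ∈ [0,1] the point γ_{a,b}(t) = a^{1/2}(a^{-1/2} b a^{-1/2})^t a^{1/2} also satisfies h γ_{a,b}(t) h* = γ_{a,b}(t) for all h ∈ H. In particular, the fixed point set P^H of the action h·a = h a h* is geodesically convex (it contains the geodesic between any two of its points). -/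
/-!
A geodesic starting at `a` can be computed from any factorization `a = x x*` with `x` invertible, as
`x (x⁻¹ b x⁻¹*)^t x*`: two such `x` differ by a unitary on the right, and the functional calculus
commutes with unitary conjugation. Since `g a g* = (g x) (g x)*`, this makes `γ` equivariant under
`g · a = g a g*`, and equivariance at a fixed pair `a`, `b` says that `γ_{a,b}(t)` is fixed.
-/

section

variable {A : Type*} [CStarAlgebra A] {a b : A}

theorem cfc_unitary_conj {f : ℝ → ℝ} (u : unitary A) (ha : IsSelfAdjoint a)
    (hf : ContinuousOn f (spectrum ℝ a)) :
    cfc f ((u : A) * a * star (u : A)) = u * cfc f a * star (u : A) := by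
  let φ : A ≃⋆ₐ[ℂ] A := Unitary.conjStarAlgAut ℂ A u
  exact (StarAlgHomClass.map_cfc (S := ℂ) φ f a hf (StarAlgEquiv.isometry φ).continuous ha
    (ha.conjugate u)).symm

theorem isPosInv_mul_star_self (x : Aˣ) : IsPosInv ((x : A) * star (x : A)) := by
  refine ⟨.mul_star_self _, fun r hr => Set.mem_Ioi.mpr (lt_of_le_of_ne ?_ ?_)⟩
  · exact spectrum_star_mul_self_nonneg (b := star (x : A)) r (by rwa [star_star])
  · rintro rfl
    exact spectrum.zero_notMem ℝ (x * star x).isUnit hr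

theorem isSelfAdjoint_cpow (a : A) (t : ℝ) : IsSelfAdjoint (cpow a t) :=
  cfc_predicate _ a

namespace IsPosInv

theorem continuousOn_rpow (ha : IsPosInv a) (t : ℝ) :
    ContinuousOn (fun x : ℝ => x ^ t) (spectrum ℝ a) :=
  continuousOn_id.rpow_const fun _ hx => Or.inl (ha.2 hx).ne'

theorem cpow_add (ha : IsPosInv a) (s t : ℝ) : cpow a (s + t) = cpow a s * cpow a t :=
  (cfc_congr fun _ hx => Real.rpow_add (ha.2 hx) s t).trans
    (cfc_mul _ _ a (ha.continuousOn_rpow s) (ha.continuousOn_rpow t))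

theorem cpow_zero (ha : IsPosInv a) : cpow a 0 = 1 := by
  simp only [cpow, Real.rpow_zero, cfc_const_one ℝ a ha.1]

theorem cpow_one (ha : IsPosInv a) : cpow a 1 = a := by
  simp only [cpow, Real.rpow_one, cfc_id' ℝ a ha.1]

/-- The square root `a^{1/2}` of a positive invertible element, as a unit with inverse
`a^{-1/2}`. -/
noncomputable def sqrt (ha : IsPosInv a) : Aˣ where
  val := cpow a (1 / 2)
  inv := cpow a (-(1 / 2))
  val_inv := by rw [← ha.cpow_add, add_neg_cancel, ha.cpow_zero]
  inv_val := by rw [← ha.cpow_add, neg_add_cancel, ha.cpow_zero]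

theorem star_sqrt (ha : IsPosInv a) : star ha.sqrt = ha.sqrt :=
  Units.ext (isSelfAdjoint_cpow a _)

theorem sqrt_mul_star_sqrt (ha : IsPosInv a) : ha.sqrt * star (ha.sqrt : A) = a := by
  rw [← Units.coe_star, star_sqrt]
  change cpow a (1 / 2) * cpow a (1 / 2) = a
  rw [← ha.cpow_add, add_halves, ha.cpow_one]

theorem mul_sqrt_mul_star (ha : IsPosInv a) (g : Aˣ) :
    (↑(g * ha.sqrt) : A) * star (↑(g * ha.sqrt) : A) = g * a * star (g : A) := by
  conv_rhs => rw [← ha.sqrt_mul_star_sqrt]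
  simp only [Units.val_mul, star_mul, mul_assoc]

theorem conj (hb : IsPosInv b) (g : Aˣ) : IsPosInv ((g : A) * b * star (g : A)) := by
  rw [← hb.mul_sqrt_mul_star]
  exact isPosInv_mul_star_self (g * hb.sqrt)

theorem cpow_unitary_conj (hb : IsPosInv b) (u : unitary A) (t : ℝ) :
    cpow ((u : A) * b * star (u : A)) t = u * cpow b t * star (u : A) :=
  cfc_unitary_conj u hb.1 (hb.continuousOn_rpow t)

end IsPosInv

/-- The curve `x (x⁻¹ b x⁻¹*)^t x*`, that is, the curve `t ↦ (x⁻¹ · b)^t` from `1` transported by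
the action of `x`. It joins `x x*` to `b`, and `geo a b` is the case `x = a^{1/2}`. -/
noncomputable def geoOfFactor (x : Aˣ) (b : A) (t : ℝ) : A :=
  x * cpow ((↑x⁻¹ : A) * b * star (↑x⁻¹ : A)) t * star (x : A)

theorem geo_eq_geoOfFactor_sqrt (ha : IsPosInv a) (b : A) (t : ℝ) :
    geo a b t = geoOfFactor ha.sqrt b t := by
  simp only [geoOfFactor, ← Units.coe_star, star_inv, ha.star_sqrt]
  rfl

theorem geoOfFactor_congr (hb : IsPosInv b) {x y : Aˣ}
    (hxy : (x : A) * star (x : A) = y * star (y : A)) (t : ℝ) :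
    geoOfFactor x b t = geoOfFactor y b t := by
  obtain ⟨u, hu⟩ : ∃ u : unitary A, (u : A) = (↑x⁻¹ : A) * y :=
    ⟨⟨_, (Units.inv_mul_mem_unitary x y).mpr (Units.ext hxy)⟩, rfl⟩
  have hconj : (↑x⁻¹ : A) * b * star (↑x⁻¹ : A)
      = u * ((↑y⁻¹ : A) * b * star (↑y⁻¹ : A)) * star (u : A) := by
    have hx : (↑x⁻¹ : A) = u * (↑y⁻¹ : A) := by rw [hu, Units.mul_inv_cancel_right]
    simp only [hx, star_mul, mul_assoc]
  have hy : (y : A) = x * u := by rw [hu, Units.mul_inv_cancel_left]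
  calc geoOfFactor x b t
      = x * (u * cpow ((↑y⁻¹ : A) * b * star (↑y⁻¹ : A)) t * star (u : A)) * star (x : A) := by
        rw [geoOfFactor, hconj, (hb.conj y⁻¹).cpow_unitary_conj]
    _ = x * u * cpow ((↑y⁻¹ : A) * b * star (↑y⁻¹ : A)) t * star ((x : A) * u) := by
        simp only [star_mul, mul_assoc]
    _ = geoOfFactor y b t := by rw [← hy, geoOfFactor]

theorem conj_geoOfFactor (g x : Aˣ) (b : A) (t : ℝ) :
    (g : A) * geoOfFactor x b t * star (g : A)
      = geoOfFactor (g * x) ((g : A) * b * star (g : A)) t := by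
  have hcancel : (↑(g * x)⁻¹ : A) * (g * b * star (g : A)) * star (↑(g * x)⁻¹ : A)
      = (↑x⁻¹ : A) * b * star (↑x⁻¹ : A) := by
    have hg : (↑(g * x)⁻¹ : A) * g = ↑x⁻¹ := by
      rw [mul_inv_rev, Units.val_mul, Units.inv_mul_cancel_right]
    calc (↑(g * x)⁻¹ : A) * (g * b * star (g : A)) * star (↑(g * x)⁻¹ : A)
        = (↑(g * x)⁻¹ : A) * g * b * star ((↑(g * x)⁻¹ : A) * g) := by
          simp only [star_mul, mul_assoc]
      _ = (↑x⁻¹ : A) * b * star (↑x⁻¹ : A) := by rw [hg]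
  rw [geoOfFactor, geoOfFactor, hcancel]
  simp only [Units.val_mul, star_mul, mul_assoc]

theorem geo_eq_geoOfFactor (hb : IsPosInv b) {x : Aˣ} (hx : (x : A) * star (x : A) = a) (t : ℝ) :
    geo a b t = geoOfFactor x b t := by
  have ha : IsPosInv a := hx ▸ isPosInv_mul_star_self x
  rw [geo_eq_geoOfFactor_sqrt ha,
    geoOfFactor_congr hb (ha.sqrt_mul_star_sqrt.trans hx.symm)]

theorem stmt4_general (g : Aˣ) (ha : IsPosInv a) (hb : IsPosInv b) (t : ℝ) :
    (g : A) * geo a b t * star (g : A)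
      = geo ((g : A) * a * star (g : A)) ((g : A) * b * star (g : A)) t := by
  rw [geo_eq_geoOfFactor_sqrt ha, conj_geoOfFactor,
    geo_eq_geoOfFactor (hb.conj g) (ha.mul_sqrt_mul_star g)]

end

/-- The fixed point set `P^H` of the action `h · a = h a h*` is geodesically convex. -/
theorem stmt4 {A : Type*} [CStarAlgebra A] (H : Subgroup Aˣ) (a b : A)
    (ha : IsPosInv a) (hb : IsPosInv b)
    (hfa : ∀ h ∈ H, (h : A) * a * star (h : A) = a)
    (hfb : ∀ h ∈ H, (h : A) * b * star (h : A) = b)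
    (t : ℝ) (ht : t ∈ Set.Icc (0 : ℝ) 1) :
    ∀ h ∈ H, (h : A) * geo a b t * star (h : A) = geo a b t := by
  intro h hh
  rw [stmt4_general h ha hb, hfa h hh, hfb h hh]
end
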